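/- Each of the four composite maps α∘β, α∘γ, β∘γ and α∘β∘γ : T⁷ → T⁷ has no fixed points. Hence the only elements of the group Γ generated by α, β, γ having fixed points on T⁷ are the identity, α, β and γ. -/

import Mathlib

/-- The 7-torus `T⁷ = (ℝ/ℤ)⁷`. -/
abbrev T7 : Type := Fin 7 → AddCircle (1 : ℝ)

/-- The element `½ ∈ ℝ/ℤ`. -/
noncomputable def half : AddCircle (1 : ℝ) := ((1 / 2 : ℝ) : AddCircle (1 : ℝ))

/-- `α(x) = (x₁, x₂, x₃, −x₄, −x₅, −x₆, −x₇)` on `T⁷` (with 0-based indexing). -/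
noncomputable def tα : T7 → T7 := fun x => ![x 0, x 1, x 2, -x 3, -x 4, -x 5, -x 6]

/-- `β(x) = (x₁, −x₂, −x₃, x₄, x₅, ½−x₆, −x₇)` on `T⁷` (with 0-based indexing). -/
noncomputable def tβ : T7 → T7 := fun x => ![x 0, -x 1, -x 2, x 3, x 4, half - x 5, -x 6]

/-- `γ(x) = (−x₁, x₂, −x₃, x₄, ½−x₅, x₆, ½−x₇)` on `T⁷` (with 0-based indexing). -/
noncomputable def tγ : T7 → T7 := fun x => ![-x 0, x 1, -x 2, x 3, half - x 4, x 5, half - x 6]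

lemma tα_invol : Function.Involutive tα := by
  intro x; funext i
  fin_cases i
  · rfl
  · rfl
  · rfl
  · exact neg_neg _
  · exact neg_neg _
  · exact neg_neg _
  · exact neg_neg _

lemma tβ_invol : Function.Involutive tβ := by
  intro x; funext i
  fin_cases i
  · rfl
  · exact neg_neg _
  · exact neg_neg _
  · rfl
  · rfl
  · exact sub_sub_cancel _ _
  · exact neg_neg _

lemma tγ_invol : Function.Involutive tγ := by
  intro x; funext i
  fin_cases i
  · exact neg_neg _
  · rfl
  · exact neg_neg _
  · rfl
  · exact sub_sub_cancel _ _
  · rfl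
  · exact sub_sub_cancel _ _

/-- `α` as a bijection (element of the group of bijections) of `T⁷`. -/
noncomputable def pα : Equiv.Perm T7 := Function.Involutive.toPerm tα tα_invol

/-- `β` as a bijection (element of the group of bijections) of `T⁷`. -/
noncomputable def pβ : Equiv.Perm T7 := Function.Involutive.toPerm tβ tβ_invol

/-- `γ` as a bijection (element of the group of bijections) of `T⁷`. -/
noncomputable def pγ : Equiv.Perm T7 := Function.Involutive.toPerm tγ tγ_invol

lemma half_ne : half ≠ 0 := by
  intro h
  unfold half at h
  rw [AddCircle.coe_eq_zero_iff] at h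
  obtain ⟨n, hn⟩ := h
  simp only [zsmul_eq_mul, mul_one] at hn
  have h2 : ((2 * n : ℤ) : ℝ) = ((1 : ℤ) : ℝ) := by push_cast; linarith
  have h3 : 2 * n = 1 := by exact_mod_cast h2
  omega

lemma half_add : half + half = 0 := by
  unfold half
  rw [← AddCircle.coe_add]
  norm_num

lemma neg_half : -half = half := neg_eq_of_add_eq_zero_left half_add

lemma key (y : AddCircle (1 : ℝ)) : -(half - y) ≠ y := by
  intro h
  apply half_ne
  have h2 : -(half - y) = y - half := neg_sub _ _
  rw [h2] at h
  exact sub_eq_self.mp h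

lemma comm_half (y : AddCircle (1 : ℝ)) : -(half - y) = half - (-y) := by
  rw [neg_sub, sub_neg_eq_add, sub_eq_add_neg, neg_half, add_comm]

lemma fix_αβ (x : T7) : tα (tβ x) ≠ x := fun h => key (x 5) (congrFun h 5)
lemma fix_αγ (x : T7) : tα (tγ x) ≠ x := fun h => key (x 4) (congrFun h 4)
lemma fix_βγ (x : T7) : tβ (tγ x) ≠ x := fun h => key (x 6) (congrFun h 6)
lemma fix_αβγ (x : T7) : tα (tβ (tγ x)) ≠ x := fun h => key (x 4) (congrFun h 4)

lemma comm_βα : pβ * pα = pα * pβ := by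
  refine Equiv.ext fun x => funext fun i => ?_
  change tβ (tα x) i = tα (tβ x) i
  fin_cases i
  · exact @rfl _ (x 0)
  · exact @rfl _ (-(x 1))
  · exact @rfl _ (-(x 2))
  · exact @rfl _ (-(x 3))
  · exact @rfl _ (-(x 4))
  · exact (comm_half (x 5)).symm
  · exact @rfl _ (-(-(x 6)))

lemma comm_γα : pγ * pα = pα * pγ := by
  refine Equiv.ext fun x => funext fun i => ?_
  change tγ (tα x) i = tα (tγ x) i
  fin_cases i
  · exact @rfl _ (-(x 0))
  · exact @rfl _ (x 1)
  · exact @rfl _ (-(x 2))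
  · exact @rfl _ (-(x 3))
  · exact (comm_half (x 4)).symm
  · exact @rfl _ (-(x 5))
  · exact (comm_half (x 6)).symm

lemma comm_γβ : pγ * pβ = pβ * pγ := by
  refine Equiv.ext fun x => funext fun i => ?_
  change tγ (tβ x) i = tβ (tγ x) i
  fin_cases i
  · exact @rfl _ (-(x 0))
  · exact @rfl _ (-(x 1))
  · exact @rfl _ (-(-(x 2)))
  · exact @rfl _ (x 3)
  · exact @rfl _ (half - (x 4))
  · exact @rfl _ (half - (x 5))
  · exact (comm_half (x 6)).symm

lemma sq_α : pα * pα = 1 := Equiv.ext tα_invol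
lemma sq_β : pβ * pβ = 1 := Equiv.ext tβ_invol
lemma sq_γ : pγ * pγ = 1 := Equiv.ext tγ_invol

lemma mem_Γ {a b c : Equiv.Perm T7} (ha : a * a = 1) (hb : b * b = 1) (hc : c * c = 1)
    (hba : b * a = a * b) (hca : c * a = a * c) (hcb : c * b = b * c) (g : Equiv.Perm T7)
    (hg : g ∈ (Subgroup.closure {a, b, c} : Subgroup (Equiv.Perm T7))) :
    g = 1 ∨ g = a ∨ g = b ∨ g = c ∨ g = a * b ∨ g = a * c ∨ g = b * c ∨ g = a * (b * c) := by
  have ha' : ∀ y, a * (a * y) = y := fun y => by rw [← mul_assoc, ha, one_mul]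
  have hb' : ∀ y, b * (b * y) = y := fun y => by rw [← mul_assoc, hb, one_mul]
  have hba' : ∀ y, b * (a * y) = a * (b * y) := fun y => by rw [← mul_assoc, hba, mul_assoc]
  have hca' : ∀ y, c * (a * y) = a * (c * y) := fun y => by rw [← mul_assoc, hca, mul_assoc]
  have hcb' : ∀ y, c * (b * y) = b * (c * y) := fun y => by rw [← mul_assoc, hcb, mul_assoc]
  have hia : a⁻¹ = a := inv_eq_of_mul_eq_one_left ha
  have hib : b⁻¹ = b := inv_eq_of_mul_eq_one_left hb
  have hic : c⁻¹ = c := inv_eq_of_mul_eq_one_left hc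
  have step : ∀ x ∈ ({a, b, c} : Set (Equiv.Perm T7)), ∀ y : Equiv.Perm T7,
      (y = 1 ∨ y = a ∨ y = b ∨ y = c ∨ y = a * b ∨ y = a * c ∨ y = b * c ∨ y = a * (b * c)) →
      (x * y = 1 ∨ x * y = a ∨ x * y = b ∨ x * y = c ∨ x * y = a * b ∨ x * y = a * c ∨
        x * y = b * c ∨ x * y = a * (b * c)) := by
    intro x hx y hy
    rcases hx with hx | hx | hx <;> rw [hx] <;>
    rcases hy with h | h | h | h | h | h | h | h <;> rw [h] <;>
    simp only [mul_one, ha, hb, hc, hba, hca, hcb, ha', hb', hba', hca', hcb', true_or, or_true]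
  induction hg using Subgroup.closure_induction_left with
  | one => exact Or.inl rfl
  | mul_left x hx y hy ih => exact step x hx y ih
  | inv_mul_cancel x hx y hy ih =>
    have hxi : x⁻¹ = x := by
      rcases hx with hx | hx | hx <;> rw [hx] <;> assumption
    rw [hxi]
    exact step x hx y ih

/-- Each of `α∘β`, `α∘γ`, `β∘γ`, `α∘β∘γ` has no fixed points on `T⁷`; hence the only elements
of the group `Γ` generated by `α, β, γ` having fixed points are the identity, `α`, `β` and `γ`. -/
theorem statement9 :
    (∀ x : T7, tα (tβ x) ≠ x) ∧ (∀ x : T7, tα (tγ x) ≠ x) ∧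
    (∀ x : T7, tβ (tγ x) ≠ x) ∧ (∀ x : T7, tα (tβ (tγ x)) ≠ x) ∧
    (∀ g ∈ (Subgroup.closure {pα, pβ, pγ} : Subgroup (Equiv.Perm T7)),
      (∃ x : T7, g x = x) → g = 1 ∨ g = pα ∨ g = pβ ∨ g = pγ) := by
  refine ⟨fix_αβ, fix_αγ, fix_βγ, fix_αβγ, ?_⟩
  rintro g hg ⟨x, hx⟩
  rcases mem_Γ sq_α sq_β sq_γ comm_βα comm_γα comm_γβ g hg with
    h | h | h | h | h | h | h | h
  · exact Or.inl h
  · exact Or.inr (Or.inl h)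
  · exact Or.inr (Or.inr (Or.inl h))
  · exact Or.inr (Or.inr (Or.inr h))
  · subst h; exact (fix_αβ x hx).elim
  · subst h; exact (fix_αγ x hx).elim
  · subst h; exact (fix_βγ x hx).elim
  · subst h; exact (fix_αβγ x hx).elim
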